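/- arXiv:1810.10471 — 2 statements merged into one kernel-verified Lean document; each statement's English description precedes it below -/
import Mathlib

section
/- For every n ∈ ℕ, the space of polynomial vector fields [P_n(ℝ²)]² decomposes as the direct sum [P_n(ℝ²)]² = ∇P_{n+1}(ℝ²) ⊕ x⊥·P_{n-1}(ℝ²), where x⊥ := (y, -x). That is: (i) every p ∈ [P_n(ℝ²)]² can be written as p = ∇r + x⊥·q with r ∈ P_{n+1}(ℝ²) and q ∈ P_{n-1}(ℝ²), and (ii) if ∇r + x⊥·q = 0 with r ∈ P_{n+1}(ℝ²) and q ∈ P_{n-1}(ℝ²), then q = 0 and ∇r = 0. -/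
/-!
Elements of `Pn n` are evaluations of formal polynomials, so everything is done in
`MvPolynomial (Fin 2) ℝ`: evaluation is injective (`evalLM_injective`) and turns `pderiv` into the
Fréchet gradient (`grad_evalLM`).

Existence: by linearity it suffices to treat the fields `(m, 0)` and `(0, m)` with `m` a monomial of
degree `k`. As `P ↦ x · P / (k + 1)` is a potential operator for curl-free fields `P` of degree `k`,
one takes `R = x · P / (k + 1)`; what remains is a multiple of `x⊥`, with factor
`Q = (∂₁ P₀ - ∂₀ P₁) / (k + 1)` (`monomial_fst_mem`, `monomial_snd_mem`).

Uniqueness: pairing `∇R + x⊥ Q = 0` with `x` kills the second term and leaves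
`X₀ ∂₀ R + X₁ ∂₁ R = 0`. The Euler operator multiplies the coefficient of a monomial by its degree
(`coeff_euler`), so `R` is constant, `∇R = 0`, and then `X₁ Q = 0` gives `Q = 0`.
-/

open Matrix

noncomputable section

/-- Evaluation of a 2-variable polynomial as a function on `ℝ × ℝ`, as a linear map. -/
def evalLM : MvPolynomial (Fin 2) ℝ →ₗ[ℝ] ((ℝ × ℝ) → ℝ) where
  toFun p := fun z => MvPolynomial.eval ![z.1, z.2] p
  map_add' p q := funext fun z => by simp
  map_smul' c p := funext fun z => by simp [MvPolynomial.smul_eval]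

/-- The space of polynomial functions `ℝ² → ℝ` of total degree at most `n`. -/
def Pn (n : ℕ) : Submodule ℝ ((ℝ × ℝ) → ℝ) :=
  (MvPolynomial.restrictTotalDegree (Fin 2) ℝ n).map evalLM

/-- The space of vector fields `ℝ² → ℝ²` with both components in `Pn n`. -/
def PnVec (n : ℕ) : Submodule ℝ ((ℝ × ℝ) → ℝ × ℝ) :=
  (Pn n).comap ((LinearMap.fst ℝ ℝ ℝ).compLeft (ℝ × ℝ)) ⊓
    (Pn n).comap ((LinearMap.snd ℝ ℝ ℝ).compLeft (ℝ × ℝ))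

def entryLM (i j : Fin 2) : Matrix (Fin 2) (Fin 2) ℝ →ₗ[ℝ] ℝ where
  toFun M := M i j
  map_add' := fun _ _ => rfl
  map_smul' := fun _ _ => rfl

/-- The space of `2×2`-matrix valued maps with all entries in `Pn n`. -/
def PnMat (n : ℕ) : Submodule ℝ ((ℝ × ℝ) → Matrix (Fin 2) (Fin 2) ℝ) :=
  ⨅ i, ⨅ j, (Pn n).comap ((entryLM i j).compLeft (ℝ × ℝ))

/-- `P_{n-1}` with the convention `P_{-1} = {0}`. -/
def Pprev : ℕ → Submodule ℝ ((ℝ × ℝ) → ℝ)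
  | 0 => ⊥
  | m + 1 => Pn m

/-- Gradient of a scalar field via the Fréchet derivative. -/
def grad (f : (ℝ × ℝ) → ℝ) (z : ℝ × ℝ) : ℝ × ℝ :=
  (fderiv ℝ f z (1, 0), fderiv ℝ f z (0, 1))

/-- The vector field `x⊥(x, y) = (y, -x)`. -/
def xperp : (ℝ × ℝ) → ℝ × ℝ := fun z => (z.2, -z.1)

/-- Scaled monomial `m_α` associated with centroid `(xE, yE)` and diameter `hE`. -/
def smono (xE yE hE : ℝ) (α : ℕ × ℕ) : (ℝ × ℝ) → ℝ :=
  fun z => ((z.1 - xE) / hE) ^ α.1 * ((z.2 - yE) / hE) ^ α.2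

/-- Scaled perpendicular vector field `m⊥`. -/
def mperp (xE yE hE : ℝ) : (ℝ × ℝ) → ℝ × ℝ :=
  fun z => ((z.2 - yE) / hE, -((z.1 - xE) / hE))

/-- Jacobian matrix of a vector field via Fréchet derivatives. -/
def jmat (v : (ℝ × ℝ) → ℝ × ℝ) (z : ℝ × ℝ) : Matrix (Fin 2) (Fin 2) ℝ :=
  !![(fderiv ℝ (fun w => (v w).1) z (1, 0)), (fderiv ℝ (fun w => (v w).1) z (0, 1));
     (fderiv ℝ (fun w => (v w).2) z (1, 0)), (fderiv ℝ (fun w => (v w).2) z (0, 1))]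

/-- Symmetric part of the gradient of a vector field. -/
def eps (v : (ℝ × ℝ) → ℝ × ℝ) (z : ℝ × ℝ) : Matrix (Fin 2) (Fin 2) ℝ :=
  (2⁻¹ : ℝ) • (jmat v z + (jmat v z)ᵀ)

/-- Frobenius inner product of `2×2` matrices. -/
def frob (A B : Matrix (Fin 2) (Fin 2) ℝ) : ℝ := ∑ i, ∑ j, A i j * B i j

open MvPolynomial in
/-- Formal partial derivatives compute the Fréchet derivative. -/
lemma hasFDerivAt_evalLM (R : MvPolynomial (Fin 2) ℝ) (z : ℝ × ℝ) :
    HasFDerivAt (evalLM R)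
      (evalLM (pderiv 0 R) z • ContinuousLinearMap.fst ℝ ℝ ℝ +
        evalLM (pderiv 1 R) z • ContinuousLinearMap.snd ℝ ℝ ℝ) z := by
  induction R using MvPolynomial.induction_on with
  | C a =>
    have : evalLM (C a) = fun _ => a := by ext; simp [evalLM]
    rw [this]
    simpa using hasFDerivAt_const a z
  | add p q hp hq =>
    rw [map_add]
    refine (hp.add hq).congr_fderiv ?_
    ext <;> simp
  | mul_X p i hp =>
    fin_cases i
    · have h : evalLM (p * X 0) = fun w => evalLM p w * w.1 := by ext; simp [evalLM]
      have h' := hp.mul (hasFDerivAt_fst (𝕜 := ℝ) (p := z))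
      simp only [Fin.zero_eta, h]
      refine h'.congr_fderiv ?_
      ext <;> simp [evalLM, pderiv_X]
    · have h : evalLM (p * X 1) = fun w => evalLM p w * w.2 := by ext; simp [evalLM]
      have h' := hp.mul (hasFDerivAt_snd (𝕜 := ℝ) (p := z))
      simp only [Fin.mk_one, h]
      refine h'.congr_fderiv ?_
      ext <;> simp [evalLM, pderiv_X]

lemma grad_evalLM (R : MvPolynomial (Fin 2) ℝ) (z : ℝ × ℝ) :
    grad (evalLM R) z =
      (evalLM (MvPolynomial.pderiv 0 R) z, evalLM (MvPolynomial.pderiv 1 R) z) := by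
  simp [grad, (hasFDerivAt_evalLM R z).fderiv]

lemma evalLM_injective : Function.Injective evalLM := by
  intro p q h
  refine MvPolynomial.funext fun v => ?_
  have h1 := congrFun h (v 0, v 1)
  have h2 : ![v 0, v 1] = v := by ext i; fin_cases i <;> rfl
  simpa [evalLM, h2] using h1

lemma evalLM_monomial_mem_Pn {n : ℕ} {s : Fin 2 →₀ ℕ} (c : ℝ) (h : s.degree ≤ n) :
    evalLM (MvPolynomial.monomial s c) ∈ Pn n := by
  refine Submodule.mem_map_of_mem ?_
  rw [MvPolynomial.mem_restrictTotalDegree]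
  exact (MvPolynomial.totalDegree_monomial_le _ _).trans h

lemma evalLM_monomial_mem_Pprev {n : ℕ} {s : Fin 2 →₀ ℕ} (c : ℝ) (h : s.degree + 1 ≤ n) :
    evalLM (MvPolynomial.monomial s c) ∈ Pprev n := by
  cases n with
  | zero => omega
  | succ m => exact evalLM_monomial_mem_Pn c (by omega)

/-- The pairs `(P₀, P₁)` of polynomials for which the field they define decomposes as
`∇R + x⊥ Q` with `R` and `Q` of the required degrees. -/
def decomposable (n : ℕ) :
    Submodule ℝ (MvPolynomial (Fin 2) ℝ × MvPolynomial (Fin 2) ℝ) where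
  carrier := {P | ∃ R Q : MvPolynomial (Fin 2) ℝ, evalLM R ∈ Pn (n + 1) ∧ evalLM Q ∈ Pprev n ∧
    P.1 = MvPolynomial.pderiv 0 R + MvPolynomial.X 1 * Q ∧
    P.2 = MvPolynomial.pderiv 1 R - MvPolynomial.X 0 * Q}
  zero_mem' := ⟨0, 0, by simp, by simp, by simp, by simp⟩
  add_mem' := by
    rintro P P' ⟨R, Q, hR, hQ, h0, h1⟩ ⟨R', Q', hR', hQ', h0', h1'⟩
    refine ⟨R + R', Q + Q', by rw [map_add]; exact add_mem hR hR',
      by rw [map_add]; exact add_mem hQ hQ', ?_, ?_⟩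
    · rw [Prod.fst_add, h0, h0', map_add]; ring
    · rw [Prod.snd_add, h1, h1', map_add]; ring
  smul_mem' := by
    rintro c P ⟨R, Q, hR, hQ, h0, h1⟩
    refine ⟨c • R, c • Q, by rw [map_smul]; exact Submodule.smul_mem _ _ hR,
      by rw [map_smul]; exact Submodule.smul_mem _ _ hQ, ?_, ?_⟩
    · rw [Prod.smul_fst, h0, Derivation.map_smul, smul_add, mul_smul_comm]
    · rw [Prod.smul_snd, h1, Derivation.map_smul, smul_sub, mul_smul_comm]

open MvPolynomial in
/-- The field `(m, 0)`, `m` a monomial of degree `k`: here `R = X₀ m / (k + 1)` and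
`Q = ∂₁ m / (k + 1)`. -/
lemma monomial_fst_mem (n : ℕ) (s : Fin 2 →₀ ℕ) (hs : s.degree ≤ n) :
    (monomial s (1 : ℝ), 0) ∈ decomposable n := by
  set d : ℝ := (s 0 + s 1 + 1 : ℝ) with hd
  have hd0 : d ≠ 0 := by positivity
  -- When `s 1 = 0`, `Q` must be `0` itself: the exponent `s - single 1 1` would truncate to `s`,
  -- whose degree is too large for `Pprev n` if `s.degree = n`.
  by_cases h : s 1 = 0
  · refine ⟨monomial (s + Finsupp.single 0 1) (1 / d), 0, evalLM_monomial_mem_Pn _ (by simpa using hs),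
      by simp, ?_, ?_⟩
    · simp only [pderiv_monomial, mul_zero, add_zero]
      simp [h, hd]
      field_simp
    · simp [pderiv_monomial, h]
  · obtain ⟨t, rfl⟩ : ∃ t, s = t + Finsupp.single 1 1 :=
      ⟨s - Finsupp.single 1 1, (tsub_add_cancel_of_le (by simpa using Nat.one_le_iff_ne_zero.mpr h)).symm⟩
    refine ⟨monomial (t + Finsupp.single 1 1 + Finsupp.single 0 1) (1 / d), monomial t ((t 1 + 1) / d),
      evalLM_monomial_mem_Pn _ (by simpa using hs), evalLM_monomial_mem_Pprev _ (by simpa using hs),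
      ?_, ?_⟩
    · rw [pderiv_monomial, X, monomial_mul, add_tsub_cancel_right, add_comm (Finsupp.single 1 1) t]
      refine Eq.trans ?_ (map_add (monomial _) _ _)
      refine congrArg (monomial _) ?_
      simp [hd] at hd0 ⊢
      field_simp
      ring
    · rw [pderiv_monomial, X, monomial_mul, add_right_comm, add_tsub_cancel_right,
        add_comm (Finsupp.single 0 1) t]
      simp
      ring_nf

open MvPolynomial in
/-- The field `(0, m)`, `m` a monomial of degree `k`: here `R = X₁ m / (k + 1)` and
`Q = -∂₀ m / (k + 1)`. -/
lemma monomial_snd_mem (n : ℕ) (s : Fin 2 →₀ ℕ) (hs : s.degree ≤ n) :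
    (0, monomial s (1 : ℝ)) ∈ decomposable n := by
  set d : ℝ := (s 0 + s 1 + 1 : ℝ) with hd
  have hd0 : d ≠ 0 := by positivity
  by_cases h : s 0 = 0
  · refine ⟨monomial (s + Finsupp.single 1 1) (1 / d), 0, evalLM_monomial_mem_Pn _ (by simpa using hs),
      by simp, ?_, ?_⟩
    · simp [pderiv_monomial, h]
    · simp only [pderiv_monomial, mul_zero, sub_zero]
      simp [h, hd]
      field_simp
  · obtain ⟨t, rfl⟩ : ∃ t, s = t + Finsupp.single 0 1 :=
      ⟨s - Finsupp.single 0 1, (tsub_add_cancel_of_le (by simpa using Nat.one_le_iff_ne_zero.mpr h)).symm⟩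
    refine ⟨monomial (t + Finsupp.single 0 1 + Finsupp.single 1 1) (1 / d), monomial t (-(t 0 + 1) / d),
      evalLM_monomial_mem_Pn _ (by simpa using hs), evalLM_monomial_mem_Pprev _ (by simpa using hs),
      ?_, ?_⟩
    · rw [pderiv_monomial, X, monomial_mul, add_right_comm, add_tsub_cancel_right,
        add_comm (Finsupp.single 1 1) t]
      refine Eq.trans ?_ (map_add (monomial _) _ _)
      simp
      ring_nf
      simp
    · rw [pderiv_monomial, X, monomial_mul, add_tsub_cancel_right, add_comm (Finsupp.single 0 1) t]
      refine Eq.trans ?_ (map_sub (monomial _) _ _)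
      refine congrArg (monomial _) ?_
      simp [hd] at hd0 ⊢
      field_simp
      ring

/-- Every pair of polynomials of degree at most `n` decomposes, by linearity from monomials. -/
lemma mem_decomposable (n : ℕ) (P₀ P₁ : MvPolynomial (Fin 2) ℝ)
    (h₀ : P₀ ∈ MvPolynomial.restrictTotalDegree (Fin 2) ℝ n)
    (h₁ : P₁ ∈ MvPolynomial.restrictTotalDegree (Fin 2) ℝ n) :
    (P₀, P₁) ∈ decomposable n := by
  have e0 : MvPolynomial.restrictTotalDegree (Fin 2) ℝ n ≤
      (decomposable n).comap (LinearMap.inl ℝ (MvPolynomial (Fin 2) ℝ) (MvPolynomial (Fin 2) ℝ)) := by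
    rw [MvPolynomial.restrictTotalDegree, MvPolynomial.restrictSupport_eq_span, Submodule.span_le]
    rintro _ ⟨s, hs, rfl⟩
    exact monomial_fst_mem n s hs
  have e1 : MvPolynomial.restrictTotalDegree (Fin 2) ℝ n ≤
      (decomposable n).comap (LinearMap.inr ℝ (MvPolynomial (Fin 2) ℝ) (MvPolynomial (Fin 2) ℝ)) := by
    rw [MvPolynomial.restrictTotalDegree, MvPolynomial.restrictSupport_eq_span, Submodule.span_le]
    rintro _ ⟨s, hs, rfl⟩
    exact monomial_snd_mem n s hs
  have h : ((P₀, 0) + (0, P₁) : MvPolynomial (Fin 2) ℝ × MvPolynomial (Fin 2) ℝ) ∈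
      decomposable n := add_mem (e0 h₀) (e1 h₁)
  rwa [Prod.mk_add_mk, add_zero, zero_add] at h

open MvPolynomial in
/-- The Euler operator multiplies each coefficient by its degree. -/
lemma coeff_euler (R : MvPolynomial (Fin 2) ℝ) (s : Fin 2 →₀ ℕ) :
    coeff s (X 0 * pderiv 0 R + X 1 * pderiv 1 R) = (s 0 + s 1 : ℝ) * coeff s R := by
  induction R using MvPolynomial.induction_on' with
  | monomial u a =>
    rw [X_mul_pderiv_monomial, X_mul_pderiv_monomial, coeff_add, coeff_smul, coeff_smul,
      nsmul_eq_mul, nsmul_eq_mul, ← add_mul, coeff_monomial]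
    by_cases h : u = s
    · subst h; simp
    · simp [h]
  | add p q hp hq =>
    rw [coeff_add s p q, mul_add, ← hp, ← hq, ← coeff_add]
    congr 1
    simp only [map_add]
    ring

open MvPolynomial in
/-- A polynomial killed by the Euler operator is constant. -/
lemma pderiv_eq_zero_of_euler (R : MvPolynomial (Fin 2) ℝ)
    (h : X 0 * pderiv 0 R + X 1 * pderiv 1 R = 0) (i : Fin 2) : pderiv i R = 0 := by
  have hR : R = C (coeff 0 R) := by
    ext s
    rw [coeff_C]
    split_ifs with hs
    · rw [hs]
    · have h1 := coeff_euler R s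
      rw [h, coeff_zero] at h1
      refine (mul_eq_zero.mp h1.symm).resolve_left fun h2 => hs ?_
      have h3 : s 0 + s 1 = 0 := by exact_mod_cast h2
      ext j
      fin_cases j
      · simp; omega
      · simp; omega
  rw [hR, pderiv_C]

lemma exists_evalLM_of_mem_Pprev {n : ℕ} {q : ℝ × ℝ → ℝ} (hq : q ∈ Pprev n) :
    ∃ Q, evalLM Q = q := by
  cases n with
  | zero => exact ⟨0, by rw [map_zero]; exact ((Submodule.mem_bot ℝ).mp hq).symm⟩
  | succ m =>
    obtain ⟨Q, -, hQ⟩ := hq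
    exact ⟨Q, hQ⟩

/-- `[P_n(ℝ²)]² = ∇P_{n+1}(ℝ²) ⊕ x⊥·P_{n-1}(ℝ²)`:
(i) every `p ∈ [P_n]²` decomposes as `p = ∇r + x⊥ q` with `r ∈ P_{n+1}`, `q ∈ P_{n-1}`;
(ii) if `∇r + x⊥ q = 0` with `r ∈ P_{n+1}`, `q ∈ P_{n-1}`, then `q = 0` and `∇r = 0`. -/
theorem polynomial_vector_field_decomposition (n : ℕ) :
    (∀ p ∈ PnVec n, ∃ r q : (ℝ × ℝ) → ℝ, r ∈ Pn (n + 1) ∧ q ∈ Pprev n ∧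
      ∀ z, p z = grad r z + q z • xperp z) ∧
    (∀ r q : (ℝ × ℝ) → ℝ, r ∈ Pn (n + 1) → q ∈ Pprev n →
      (∀ z, grad r z + q z • xperp z = 0) → q = 0 ∧ ∀ z, grad r z = 0) := by
  constructor
  · rintro p ⟨⟨P₀, h₀, e₀⟩, ⟨P₁, h₁, e₁⟩⟩
    obtain ⟨R, Q, hR, hQ, d₀, d₁⟩ := mem_decomposable n P₀ P₁ h₀ h₁
    refine ⟨evalLM R, evalLM Q, hR, hQ, fun z => ?_⟩
    have f₀ : (p z).1 = evalLM P₀ z := (congrFun e₀ z).symm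
    have f₁ : (p z).2 = evalLM P₁ z := (congrFun e₁ z).symm
    simp only at d₀ d₁
    rw [grad_evalLM]
    ext
    · rw [f₀, d₀]
      simp [evalLM, xperp]
      ring
    · rw [f₁, d₁]
      simp [evalLM, xperp]
      ring
  · rintro r q ⟨R, -, rfl⟩ hq h
    obtain ⟨Q, rfl⟩ := exists_evalLM_of_mem_Pprev hq
    have e₀ : MvPolynomial.pderiv 0 R + MvPolynomial.X 1 * Q = 0 := by
      refine evalLM_injective (funext fun z => ?_)
      have := congrArg Prod.fst (h z)
      rw [grad_evalLM] at this
      simp [evalLM, xperp] at this ⊢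
      linarith
    have e₁ : MvPolynomial.pderiv 1 R - MvPolynomial.X 0 * Q = 0 := by
      refine evalLM_injective (funext fun z => ?_)
      have := congrArg Prod.snd (h z)
      rw [grad_evalLM] at this
      simp [evalLM, xperp] at this ⊢
      linarith
    have hR := pderiv_eq_zero_of_euler R
      (by linear_combination MvPolynomial.X 0 * e₀ + MvPolynomial.X 1 * e₁)
    have hQ : Q = 0 := by
      rw [hR 0, zero_add] at e₀
      exact (mul_eq_zero.mp e₀).resolve_left (MvPolynomial.X_ne_zero 1)
    refine ⟨by rw [hQ, map_zero], fun z => ?_⟩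
    rw [grad_evalLM, hR 0, hR 1]
    simp

end
end

section
/- Let (x_E, y_E) ∈ ℝ², h_E > 0, and let α = (α₁, α₂) be a multi-index with |α| = α₁ + α₂. Then the vector field (m_α, 0) on ℝ² satisfies the identity (m_α, 0) = (h_E/(|α|+1))·∇m_{(α₁+1, α₂)} + (α₂/(|α|+1))·m⊥·m_{(α₁, α₂-1)}, where the second summand is interpreted as the zero vector field when α₂ = 0 (its scalar coefficient α₂ vanishes in that case). -/
/-!
Write `X = (x - xE) / hE` and `Y = (y - yE) / hE`. By `grad_smono`, the gradient of
`X ^ (α₁ + 1) * Y ^ α₂` is `hE⁻¹` times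
`((α₁ + 1) * X ^ α₁ * Y ^ α₂, α₂ * X ^ (α₁ + 1) * Y ^ (α₂ - 1))`.
Adding `α₂ * X ^ α₁ * Y ^ (α₂ - 1)` times `(Y, -X)` to `hE` times this gradient cancels the second
component and turns the first into `(α₁ + α₂ + 1) * X ^ α₁ * Y ^ α₂`.
-/

open Matrix

noncomputable section

/-- The gradient of a scaled monomial. The truncated exponents `α.1 - 1` and `α.2 - 1` are harmless,
as each comes with the factor `α.1` resp. `α.2`, and no condition on `hE` is needed. -/
theorem grad_smono (xE yE hE : ℝ) (α : ℕ × ℕ) (z : ℝ × ℝ) :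
    grad (smono xE yE hE α) z =
      (α.1 / hE * smono xE yE hE (α.1 - 1, α.2) z,
        α.2 / hE * smono xE yE hE (α.1, α.2 - 1) z) := by
  have hX : HasFDerivAt (fun w : ℝ × ℝ => (w.1 - xE) / hE)
      (hE⁻¹ • ContinuousLinearMap.fst ℝ ℝ ℝ) z := by
    simpa only [div_eq_mul_inv] using (hasFDerivAt_fst.sub_const xE).mul_const hE⁻¹
  have hY : HasFDerivAt (fun w : ℝ × ℝ => (w.2 - yE) / hE)
      (hE⁻¹ • ContinuousLinearMap.snd ℝ ℝ ℝ) z := by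
    simpa only [div_eq_mul_inv] using (hasFDerivAt_snd.sub_const yE).mul_const hE⁻¹
  have h := ((hX.pow α.1).mul (hY.pow α.2)).fderiv
  have hs : smono xE yE hE α =
      (fun w : ℝ × ℝ => ((w.1 - xE) / hE) ^ α.1) * fun w => ((w.2 - yE) / hE) ^ α.2 := rfl
  rw [grad, hs, h]
  ext <;> simp [smono] <;> ring

/-- `(m_α, 0) = (h_E/(|α|+1)) ∇ m_{(α₁+1,α₂)} + (α₂/(|α|+1)) m⊥ m_{(α₁,α₂-1)}`
(when `α₂ = 0` the second summand vanishes since its scalar coefficient `α₂` is zero). -/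
theorem scaled_monomial_decomposition_x (xE yE hE : ℝ) (hhE : 0 < hE) (α₁ α₂ : ℕ) (z : ℝ × ℝ) :
    ((smono xE yE hE (α₁, α₂) z, (0 : ℝ)) : ℝ × ℝ) =
      (hE / ((α₁ : ℝ) + (α₂ : ℝ) + 1)) • grad (smono xE yE hE (α₁ + 1, α₂)) z +
        ((α₂ : ℝ) / ((α₁ : ℝ) + (α₂ : ℝ) + 1)) •
          (smono xE yE hE (α₁, α₂ - 1) z • mperp xE yE hE z) := by
  have hh : hE ≠ 0 := hhE.ne'
  have hd : (α₁ : ℝ) + (α₂ : ℝ) + 1 ≠ 0 := by positivity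
  rw [grad_smono]
  -- Splitting off `α₂ = 0` turns `α₂ - 1` into a genuine predecessor in the other case.
  rcases α₂ with _ | n
  all_goals
    push_cast at hd ⊢
    simp only [smono, mperp]
    generalize (z.1 - xE) / hE = X
    generalize (z.2 - yE) / hE = Y
    ext <;> simp <;> field_simp <;> ring

end
end
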